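/- Let J: ℝⁿ → ℝ and g: ℝⁿ × [0,1] → ℝᵐ be continuously differentiable, a ∈ ℝⁿ, and let ρ_a be the associated homotopy map. Then every zero of the homotopy is primal and dual feasible for the intermediate problem at its parameter value: if ρ_a(λ, u, μ) = 0 for some (λ, u, μ) ∈ [0,1] × ℝⁿ × ℝᵐ, then gᵢ(u, λ) ≤ 0, μᵢ ≥ 0 and μᵢ·gᵢ(u, λ) = 0 for every i ∈ {1,…,m}. -/

import Mathlib

/-- The cubic complementarity function `φ(a,b) = |a - b|³ - a³ - b³`. -/
noncomputable def cubicPhi (a b : ℝ) : ℝ := |a - b| ^ 3 - a ^ 3 - b ^ 3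

/-- The homotopy map
`ρ_a(λ, u, μ) = (λ(∇ᵤJ(u) + ∇ᵤg(u,λ)ᵀμ) + (1-λ)(u - a), (φ(μᵢ, -gᵢ(u,λ)))ᵢ)`. -/
noncomputable def homotopyMap {n m : ℕ}
    (J : EuclideanSpace ℝ (Fin n) → ℝ)
    (g : EuclideanSpace ℝ (Fin n) → ℝ → Fin m → ℝ)
    (a : EuclideanSpace ℝ (Fin n))
    (lam : ℝ) (u : EuclideanSpace ℝ (Fin n)) (μ : Fin m → ℝ) :
    EuclideanSpace ℝ (Fin n) × (Fin m → ℝ) :=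
  (lam • (gradient J u + ∑ i, μ i • gradient (fun v => g v lam i) u)
      + (1 - lam) • (u - a),
   fun i => cubicPhi (μ i) (-(g u lam i)))

/-! The equation `φ(a, b) = 0` reads `|a - b| ^ 3 = a ^ 3 + b ^ 3`. Let `b ≤ a`. Since the cube is
strictly increasing, `0 < b` would give `(a - b) ^ 3 < a ^ 3 < a ^ 3 + b ^ 3`, and `b < 0` the
reverse inequalities, so `b = 0 ≤ a`; the case `a ≤ b` is symmetric. Hence `φ` is a complementarity
function. -/

section OddPower

variable {R : Type*} [Ring R] [LinearOrder R] [IsStrictOrderedRing R] {a b : R} {k : ℕ}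

theorem sub_pow_eq_add_pow_iff_of_odd (hk : Odd k) : (a - b) ^ k = a ^ k + b ^ k ↔ b = 0 := by
  constructor
  · intro h
    rcases lt_trichotomy b 0 with hb | hb | hb
    · have hlt : a ^ k + b ^ k < (a - b) ^ k := calc
        a ^ k + b ^ k < a ^ k := add_lt_of_neg_right _ (hk.pow_neg hb)
        _ < (a - b) ^ k := hk.pow_lt_pow.mpr (lt_sub_iff_add_lt.mpr (add_lt_of_neg_right a hb))
      exact absurd h hlt.ne'
    · exact hb
    · have hlt : (a - b) ^ k < a ^ k + b ^ k := calc
        (a - b) ^ k < a ^ k := hk.pow_lt_pow.mpr (sub_lt_self a hb)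
        _ < a ^ k + b ^ k := lt_add_of_pos_right _ (pow_pos hb k)
      exact absurd h hlt.ne
  · rintro rfl
    rw [sub_zero, zero_pow hk.pos.ne', add_zero]

theorem abs_sub_pow_eq_add_pow_iff_of_odd (hk : Odd k) :
    |a - b| ^ k = a ^ k + b ^ k ↔ min a b = 0 := by
  rcases le_total b a with hba | hab
  · rw [abs_of_nonneg (sub_nonneg.mpr hba), min_eq_right hba, sub_pow_eq_add_pow_iff_of_odd hk]
  · rw [abs_sub_comm, abs_of_nonneg (sub_nonneg.mpr hab), min_eq_left hab, add_comm (a ^ k),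
      sub_pow_eq_add_pow_iff_of_odd hk]

end OddPower

theorem min_eq_zero_iff_nonneg_and_mul_eq_zero {R : Type*} [MulZeroClass R] [NoZeroDivisors R]
    [LinearOrder R] {a b : R} : min a b = 0 ↔ 0 ≤ a ∧ 0 ≤ b ∧ a * b = 0 := by
  constructor
  · intro h
    refine ⟨h ▸ min_le_left a b, h ▸ min_le_right a b, mul_eq_zero.mpr ?_⟩
    exact (min_choice a b).imp (·.symm.trans h) (·.symm.trans h)
  · rintro ⟨ha, hb, hab⟩
    rcases mul_eq_zero.mp hab with rfl | rfl
    · exact min_eq_left hb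
    · exact min_eq_right ha

theorem cubicPhi_eq_zero_iff {a b : ℝ} : cubicPhi a b = 0 ↔ 0 ≤ a ∧ 0 ≤ b ∧ a * b = 0 := by
  rw [cubicPhi, sub_sub, sub_eq_zero, abs_sub_pow_eq_add_pow_iff_of_odd (by decide : Odd 3),
    min_eq_zero_iff_nonneg_and_mul_eq_zero]

theorem homotopyMap_zero_is_feasible_general
    {n m : ℕ} (J : EuclideanSpace ℝ (Fin n) → ℝ)
    (g : EuclideanSpace ℝ (Fin n) → ℝ → Fin m → ℝ)
    (a : EuclideanSpace ℝ (Fin n)) (lam : ℝ)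
    (u : EuclideanSpace ℝ (Fin n)) (μ : Fin m → ℝ) :
    (homotopyMap J g a lam u μ).2 = 0 ↔
      ∀ i, g u lam i ≤ 0 ∧ 0 ≤ μ i ∧ μ i * g u lam i = 0 := by
  simp only [homotopyMap, funext_iff, Pi.zero_apply, cubicPhi_eq_zero_iff, neg_nonneg, mul_neg,
    neg_eq_zero, and_left_comm]

/-- every zero of the homotopy is primal and dual feasible for the
intermediate problem at its parameter value. -/
theorem homotopyMap_zero_is_feasible
    {n m : ℕ} (J : EuclideanSpace ℝ (Fin n) → ℝ)
    (g : EuclideanSpace ℝ (Fin n) → ℝ → Fin m → ℝ)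
    (hJ : ContDiff ℝ 1 J)
    (hg : ∀ i, ContDiff ℝ 1 (fun q : EuclideanSpace ℝ (Fin n) × ℝ => g q.1 q.2 i))
    (a : EuclideanSpace ℝ (Fin n))
    (lam : ℝ) (hlam : lam ∈ Set.Icc (0 : ℝ) 1)
    (u : EuclideanSpace ℝ (Fin n)) (μ : Fin m → ℝ)
    (hzero : homotopyMap J g a lam u μ = 0) :
    ∀ i, g u lam i ≤ 0 ∧ 0 ≤ μ i ∧ μ i * g u lam i = 0 :=
  (homotopyMap_zero_is_feasible_general J g a lam u μ).mp (congrArg Prod.snd hzero)
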